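/- arXiv:2511.03358 — 2 statements merged into one kernel-verified Lean document; each statement's English description precedes it below -/
import Mathlib

section
/- Fix a = 1, θ = 1 and ν ∈ [0, 1/2). Set σ* = π·Γ(1−ν)/Γ(1/2−ν), where Γ is the Gamma function. Then for every σa > σ* the limit lim_{σm → ∞} F'_μ(ν, σa, σm, 1, 1)[0] exists and is strictly negative, while for every 0 < σa < σ* the limit exists and is strictly positive; in particular, for σa < σ* increasing the multiplicative noise eventually places the system in the stable phase. -/
open MeasureTheory Real Set Filter

/-- Unnormalised stationary density ρ0[μ](x) of the McKean–Vlasov SDE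
`dX = (aX − X³ − θ(X − m₁))dt + σa dB¹ + σm X ∘_ν dB²`. -/
noncomputable def rho0 (ν σa σm a θ μ x : ℝ) : ℝ :=
  Real.exp (((a - θ - ν * σm ^ 2 + σa ^ 2 / σm ^ 2) / σm ^ 2) *
      Real.log (1 + (σm ^ 2 / σa ^ 2) * x ^ 2) +
    (2 * θ * μ / (σa * σm)) * Real.arctan (σm * x / σa) - x ^ 2 / σm ^ 2)

/-- Normalisation constant Z[μ] = ∫ ρ0[μ]. -/
noncomputable def Z (ν σa σm a θ μ : ℝ) : ℝ := ∫ x : ℝ, rho0 ν σa σm a θ μ x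

/-- Self-consistency function F(ν,σa,σm,a,θ)[μ] = (∫ (x−μ)·ρ0[μ]) / Z[μ]. -/
noncomputable def F (ν σa σm a θ μ : ℝ) : ℝ :=
  (∫ x : ℝ, (x - μ) * rho0 ν σa σm a θ μ x) / Z ν σa σm a θ μ

/-- F'_μ[0] : the derivative at μ = 0 of μ ↦ F(ν,σa,σm,a,θ)[μ]. -/
noncomputable def Fmu' (ν σa σm a θ : ℝ) : ℝ := deriv (fun μ => F ν σa σm a θ μ) 0

/-- Gaussian moment integrand. -/
noncomputable def gm (s y : ℝ) : ℝ := |y| ^ s * Real.exp (-y ^ 2)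

/-- Rescaled weight. -/
noncomputable def wt (ν ε y : ℝ) : ℝ := (ε + y ^ 2) ^ (ε - ν) * Real.exp (-y ^ 2)

lemma gm_integral {s : ℝ} (hs : -1 < s) : ∫ y, gm s y = Real.Gamma ((s + 1) / 2) := by
  have h := integral_comp_abs (f := fun x => x ^ s * Real.exp (-x ^ (2 : ℝ)))
  have h2 := integral_rpow_mul_exp_neg_rpow (p := 2) (q := s) two_pos hs
  rw [h2] at h
  have e : (fun y => gm s y) = fun x : ℝ => |x| ^ s * Real.exp (-|x| ^ (2 : ℝ)) := by
    funext x
    rw [gm, Real.rpow_two, sq_abs]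
  rw [e, h]; ring

lemma gm_integrable {s : ℝ} (hs : -1 < s) : Integrable (gm s) := by
  by_contra h
  have h1 := gm_integral hs
  have h2 : ∫ y, gm s y = 0 := integral_undef h
  have h3 : 0 < Real.Gamma ((s + 1) / 2) := Real.Gamma_pos_of_pos (by linarith)
  linarith

lemma ae_ne_zero : ∀ᵐ y : ℝ, y ≠ 0 := by
  simp [ae_iff]

lemma wt_meas (ν ε : ℝ) : Measurable (wt ν ε) := by
  unfold wt; fun_prop

lemma wt_nonneg {ν ε : ℝ} (hε : 0 < ε) (y : ℝ) : 0 < wt ν ε y := by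
  unfold wt; positivity

lemma wt_bound {ν ε y : ℝ} (hν : 0 ≤ ν) (hε : 0 < ε) (hε1 : ε ≤ 1) (hy : y ≠ 0) :
    wt ν ε y ≤ gm 0 y + gm 2 y + gm (-2 * ν) y := by
  have hy' : 0 < |y| := abs_pos.2 hy
  have key : (ε + y ^ 2) ^ (ε - ν) ≤ 1 + y ^ 2 + |y| ^ (-2 * ν) := by
    have h0 : 0 < |y| ^ (-2 * ν) := by positivity
    have hy2 : 0 < y ^ 2 := by positivity
    rcases le_total 0 (ε - ν) with hp | hp
    · have h1 : (ε + y ^ 2) ^ (ε - ν) ≤ (1 + y ^ 2) ^ (ε - ν) :=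
        Real.rpow_le_rpow (by positivity) (by linarith) hp
      have h2 : (1 + y ^ 2) ^ (ε - ν) ≤ (1 + y ^ 2) ^ (1 : ℝ) :=
        Real.rpow_le_rpow_of_exponent_le (by linarith) (by linarith)
      rw [Real.rpow_one] at h2
      linarith
    · have h1 : (ε + y ^ 2) ^ (ε - ν) ≤ (y ^ 2) ^ (ε - ν) :=
        Real.rpow_le_rpow_of_nonpos hy2 (by linarith) hp
      rcases le_total 1 (y ^ 2) with h | h
      · have h2 : (y ^ 2) ^ (ε - ν) ≤ 1 := Real.rpow_le_one_of_one_le_of_nonpos h hp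
        linarith
      · have h2 : (y ^ 2) ^ (ε - ν) ≤ (y ^ 2) ^ (-ν) :=
          Real.rpow_le_rpow_of_exponent_ge hy2 h (by linarith)
        have h3 : (y ^ 2) ^ (-ν) = |y| ^ (-2 * ν) := by
          rw [← sq_abs, ← Real.rpow_two, ← Real.rpow_mul hy'.le]; congr 1; ring
        linarith
  calc wt ν ε y ≤ (1 + y ^ 2 + |y| ^ (-2 * ν)) * Real.exp (-y ^ 2) :=
        mul_le_mul_of_nonneg_right key (Real.exp_pos _).le
    _ = _ := by
      simp only [gm, Real.rpow_zero, Real.rpow_two, sq_abs]; ring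

lemma abs_mul_gm {s y : ℝ} (hy : y ≠ 0) : |y| * gm s y = gm (1 + s) y := by
  have hy' : 0 < |y| := abs_pos.2 hy
  rw [gm, gm, Real.rpow_add hy', Real.rpow_one]; ring

lemma bound_integrable0 {ν : ℝ} (hν : ν ∈ Set.Ico (0 : ℝ) (1 / 2)) :
    Integrable (fun y => gm 0 y + gm 2 y + gm (-2 * ν) y) :=
  ((gm_integrable (by norm_num)).add (gm_integrable (by norm_num))).add
    (gm_integrable (by linarith [hν.2]))

lemma bound_integrable1 {ν : ℝ} (hν : ν ∈ Set.Ico (0 : ℝ) (1 / 2)) :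
    Integrable (fun y => |y| * (gm 0 y + gm 2 y + gm (-2 * ν) y)) := by
  have h : Integrable (fun y => gm (1 + 0) y + gm (1 + 2) y + gm (1 + -2 * ν) y) :=
    ((gm_integrable (by norm_num)).add (gm_integrable (by norm_num))).add
      (gm_integrable (by linarith [hν.2]))
  refine h.congr ?_
  filter_upwards [ae_ne_zero] with y hy
  rw [mul_add, mul_add, abs_mul_gm hy, abs_mul_gm hy, abs_mul_gm hy]

lemma wt_integrable {ν ε : ℝ} (hν : ν ∈ Set.Ico (0 : ℝ) (1 / 2)) (hε : 0 < ε) (hε1 : ε ≤ 1) :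
    Integrable (wt ν ε) := by
  refine (bound_integrable0 hν).mono' (wt_meas _ _).aestronglyMeasurable ?_
  filter_upwards [ae_ne_zero] with y hy
  rw [Real.norm_of_nonneg (wt_nonneg hε y).le]
  exact wt_bound hν.1 hε hε1 hy

lemma mul_wt_integrable {ν ε : ℝ} (hν : ν ∈ Set.Ico (0 : ℝ) (1 / 2)) (hε : 0 < ε) (hε1 : ε ≤ 1) :
    Integrable (fun y => y * wt ν ε y) := by
  refine (bound_integrable1 hν).mono'
    (measurable_id.mul (wt_meas _ _)).aestronglyMeasurable ?_
  filter_upwards [ae_ne_zero] with y hy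
  rw [norm_mul, Real.norm_of_nonneg (wt_nonneg hε y).le, Real.norm_eq_abs]
  exact mul_le_mul_of_nonneg_left (wt_bound hν.1 hε hε1 hy) (abs_nonneg _)

lemma abs_arctan_le (x : ℝ) : |Real.arctan x| ≤ π / 2 :=
  abs_le.2 ⟨(Real.neg_pi_div_two_lt_arctan x).le, (Real.arctan_lt_pi_div_two x).le⟩

/-- Differentiation under the integral for exponential tilts with a bounded function. -/
lemma deriv_tilt {g h : ℝ → ℝ} {C : ℝ} (hg : Integrable g) (hh : Measurable h)
    (hC : ∀ x, |h x| ≤ C) :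
    HasDerivAt (fun μ : ℝ => ∫ x, g x * Real.exp (μ * h x)) (∫ x, g x * h x) 0 := by
  have hC0 : 0 ≤ C := (abs_nonneg _).trans (hC 0)
  have := (hasDerivAt_integral_of_dominated_loc_of_deriv_le (μ := volume)
    (F := fun μ x => g x * Real.exp (μ * h x))
    (F' := fun μ x => g x * (Real.exp (μ * h x) * h x)) (x₀ := (0 : ℝ))
    (bound := fun x => |g x| * (Real.exp C * C))
    (Metric.ball_mem_nhds 0 one_pos) ?_ ?_ ?_ ?_ ?_ ?_).2
  · simpa using this
  · refine Eventually.of_forall fun μ => hg.aestronglyMeasurable.mul ?_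
    exact (by fun_prop : Measurable fun x => Real.exp (μ * h x)).aestronglyMeasurable
  · simpa using hg
  · refine hg.aestronglyMeasurable.mul ?_
    exact (by fun_prop : Measurable fun x => Real.exp (0 * h x) * h x).aestronglyMeasurable
  · refine Eventually.of_forall fun x μ hμ => ?_
    have hμ' : |μ| < 1 := by simpa using hμ
    rw [norm_mul, norm_mul, Real.norm_eq_abs, Real.norm_eq_abs, Real.norm_eq_abs, Real.abs_exp]
    have h1 : μ * h x ≤ C := by
      calc μ * h x ≤ |μ * h x| := le_abs_self _
        _ = |μ| * |h x| := abs_mul _ _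
        _ ≤ 1 * C := mul_le_mul hμ'.le (hC x) (abs_nonneg _) zero_le_one
        _ = C := one_mul _
    gcongr
    exact hC x
  · exact hg.abs.mul_const _
  · refine Eventually.of_forall fun x μ _ => ?_
    have : HasDerivAt (fun μ : ℝ => μ * h x) (h x) μ := by
      simpa using (hasDerivAt_id μ).mul_const (h x)
    exact (this.exp).const_mul (g x)

lemma rho0_eq {ν σa σm μ x : ℝ} (ha : 0 < σa) (hm : 0 < σm) :
    rho0 ν σa σm 1 1 μ x =
      ((σa ^ 2 / σm ^ 4) ^ (ν - σa ^ 2 / σm ^ 4) * wt ν (σa ^ 2 / σm ^ 4) (x / σm)) *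
      Real.exp (μ * (2 / (σa * σm) * Real.arctan (σm * x / σa))) := by
  have hε : 0 < σa ^ 2 / σm ^ 4 := by positivity
  have h1 : 1 + (σm ^ 2 / σa ^ 2) * x ^ 2
      = (σa ^ 2 / σm ^ 4 + (x / σm) ^ 2) / (σa ^ 2 / σm ^ 4) := by
    field_simp
  have hb : 0 < σa ^ 2 / σm ^ 4 + (x / σm) ^ 2 := by positivity
  have h2 : (1 - 1 - ν * σm ^ 2 + σa ^ 2 / σm ^ 2) / σm ^ 2 = σa ^ 2 / σm ^ 4 - ν := by
    field_simp; ring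
  rw [rho0, wt, h1, h2, Real.log_div hb.ne' hε.ne', Real.rpow_def_of_pos hb,
    Real.rpow_def_of_pos hε, ← Real.exp_add, ← Real.exp_add, ← Real.exp_add]
  congr 1
  field_simp
  ring

lemma Fmu'_eq {ν σa σm : ℝ} (hν : ν ∈ Set.Ico (0 : ℝ) (1 / 2)) (ha : 0 < σa) (hm : 0 < σm)
    (hε1 : σa ^ 2 / σm ^ 4 ≤ 1) :
    Fmu' ν σa σm 1 1 = 2 / σa * (∫ y, y * Real.arctan (σm ^ 2 / σa * y) *
      wt ν (σa ^ 2 / σm ^ 4) y) / (∫ y, wt ν (σa ^ 2 / σm ^ 4) y) - 1 := by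
  have hε : 0 < σa ^ 2 / σm ^ 4 := by positivity
  set ε := σa ^ 2 / σm ^ 4 with hεd
  set c := ε ^ (ν - ε) with hc
  have hc0 : 0 < c := by positivity
  set h : ℝ → ℝ := fun x => 2 / (σa * σm) * Real.arctan (σm * x / σa) with hh
  have hhm : Measurable h := by
    simp only [hh]
    have : Measurable Real.arctan := Real.continuous_arctan.measurable
    fun_prop
  have hhC : ∀ x, |h x| ≤ 2 / (σa * σm) * (π / 2) := by
    intro x
    simp only [hh]
    rw [abs_mul, abs_of_pos (by positivity : 0 < 2 / (σa * σm))]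
    exact mul_le_mul_of_nonneg_left (abs_arctan_le _) (by positivity)
  set g : ℝ → ℝ := fun x => c * wt ν ε (x / σm) with hgd
  have hg : Integrable g := ((wt_integrable hν hε hε1).comp_div hm.ne').const_mul c
  have hxg : Integrable (fun x => x * g x) := by
    refine (((mul_wt_integrable hν hε hε1).comp_div hm.ne').const_mul (c * σm)).congr ?_
    refine Eventually.of_forall fun x => ?_
    simp only [hgd]
    field_simp
  have hrho : ∀ μ x, rho0 ν σa σm 1 1 μ x = g x * Real.exp (μ * h x) :=
    fun μ x => rho0_eq ha hm
  have hexpb : ∀ μ x, ‖Real.exp (μ * h x)‖ ≤ Real.exp (|μ| * (2 / (σa * σm) * (π / 2))) := by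
    intro μ x
    rw [Real.norm_eq_abs, Real.abs_exp]
    refine Real.exp_le_exp.2 ?_
    calc μ * h x ≤ |μ * h x| := le_abs_self _
      _ = |μ| * |h x| := abs_mul _ _
      _ ≤ _ := mul_le_mul_of_nonneg_left (hhC x) (abs_nonneg _)
  have hi0 : ∀ μ, Integrable (fun x => g x * Real.exp (μ * h x)) := fun μ =>
    hg.mul_bdd (by fun_prop : Measurable fun x => Real.exp (μ * h x)).aestronglyMeasurable
      (Eventually.of_forall (hexpb μ))
  have hi1 : ∀ μ, Integrable (fun x => x * g x * Real.exp (μ * h x)) := fun μ =>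
    hxg.mul_bdd (by fun_prop : Measurable fun x => Real.exp (μ * h x)).aestronglyMeasurable
      (Eventually.of_forall (hexpb μ))
  have hgpos : ∀ x, 0 < g x := fun x => mul_pos hc0 (wt_nonneg hε _)
  have hZpos : ∀ μ, 0 < ∫ x, g x * Real.exp (μ * h x) := by
    intro μ
    refine (integral_pos_iff_support_of_nonneg
      (fun x => (mul_pos (hgpos x) (Real.exp_pos _)).le) (hi0 μ)).2 ?_
    have : Function.support (fun x => g x * Real.exp (μ * h x)) = Set.univ := by
      ext x
      simpa using (hgpos x).ne'
    rw [this]; simp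
  have hF : (fun μ => F ν σa σm 1 1 μ) = fun μ => (∫ x, x * g x * Real.exp (μ * h x)) /
      (∫ x, g x * Real.exp (μ * h x)) - μ := by
    funext μ
    have e1 : ∫ x, (x - μ) * rho0 ν σa σm 1 1 μ x = (∫ x, x * g x * Real.exp (μ * h x))
        - μ * ∫ x, g x * Real.exp (μ * h x) := by
      rw [← integral_const_mul, ← integral_sub (hi1 μ) ((hi0 μ).const_mul μ)]
      congr 1; funext x; rw [hrho]; ring
    have e2 : Z ν σa σm 1 1 μ = ∫ x, g x * Real.exp (μ * h x) := by
      rw [Z]; congr 1; funext x; rw [hrho]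
    rw [F, e1, e2, sub_div, mul_div_cancel_right₀ _ (hZpos μ).ne']
  have hodd : ∫ x, x * g x = 0 := by
    have h1 := integral_neg_eq_self (fun x => x * g x) volume
    have h2 : (fun x => -x * g (-x)) = fun x => -(x * g x) := by
      funext x
      simp only [hgd, wt]
      rw [neg_div, neg_sq]; ring
    rw [h2, integral_neg] at h1
    linarith
  have hd := ((deriv_tilt hxg hhm hhC).div (deriv_tilt hg hhm hhC) (hZpos 0).ne').sub
    (hasDerivAt_id (0 : ℝ))
  have hd' : Fmu' ν σa σm 1 1 = (∫ x, x * g x * h x) / (∫ x, g x) - 1 := by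
    have hz := (hZpos 0).ne'
    simp only [zero_mul, Real.exp_zero, mul_one] at hd hz
    rw [Fmu', hF]
    refine hd.deriv.trans ?_
    rw [hodd]
    field_simp
    ring
  have e3 : ∫ x, g x = c * σm * ∫ y, wt ν ε y := by
    simp only [hgd]
    rw [integral_const_mul, Measure.integral_comp_div (wt ν ε), abs_of_pos hm, smul_eq_mul]
    ring
  have e4 : ∫ x, x * g x * h x = c * σm * (2 / σa) *
      ∫ y, y * Real.arctan (σm ^ 2 / σa * y) * wt ν ε y := by
    have e5 : (fun x => x * g x * h x) = fun x => (c * (2 / σa)) *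
        ((fun y => y * Real.arctan (σm ^ 2 / σa * y) * wt ν ε y) (x / σm)) := by
      funext x
      simp only [hgd, hh]
      have : σm ^ 2 / σa * (x / σm) = σm * x / σa := by field_simp
      rw [this]
      field_simp
    rw [e5, integral_const_mul, Measure.integral_comp_div
      (fun y => y * Real.arctan (σm ^ 2 / σa * y) * wt ν ε y), abs_of_pos hm, smul_eq_mul]
    ring
  rw [hd', e3, e4, mul_assoc (c * σm), mul_div_mul_left _ _ (by positivity)]

lemma eps_tendsto (σa : ℝ) : Tendsto (fun σm : ℝ => σa ^ 2 / σm ^ 4) atTop (nhds 0) :=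
  Tendsto.div_atTop tendsto_const_nhds (tendsto_pow_atTop (by norm_num))

lemma wt_tendsto {ν σa y : ℝ} (hy : y ≠ 0) :
    Tendsto (fun σm : ℝ => wt ν (σa ^ 2 / σm ^ 4) y) atTop (nhds (gm (-2 * ν) y)) := by
  have hy' : 0 < |y| := abs_pos.2 hy
  have h := eps_tendsto σa
  have h1 : Tendsto (fun σm : ℝ => σa ^ 2 / σm ^ 4 + y ^ 2) atTop (nhds (0 + y ^ 2)) :=
    h.add_const _
  have h2 : Tendsto (fun σm : ℝ => σa ^ 2 / σm ^ 4 - ν) atTop (nhds (0 - ν)) := h.sub_const _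
  have h3 := (h1.rpow h2 (Or.inl (by positivity))).mul_const (Real.exp (-y ^ 2))
  have e : (0 + y ^ 2) ^ (0 - ν) = |y| ^ (-2 * ν) := by
    rw [zero_add, ← sq_abs, ← Real.rpow_two, ← Real.rpow_mul hy'.le]; congr 1; ring
  rw [e] at h3
  exact h3

lemma arctan_tendsto {σa y : ℝ} (ha : 0 < σa) (hy : y ≠ 0) :
    Tendsto (fun σm : ℝ => y * Real.arctan (σm ^ 2 / σa * y)) atTop (nhds (π / 2 * |y|)) := by
  have hp : Tendsto (fun σm : ℝ => σm ^ 2 / σa * |y|) atTop atTop :=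
    ((tendsto_pow_atTop (by norm_num)).atTop_div_const ha).atTop_mul_const (abs_pos.2 hy)
  have h1 : Tendsto (fun σm : ℝ => Real.arctan (σm ^ 2 / σa * |y|)) atTop (nhds (π / 2)) :=
    (tendsto_nhds_of_tendsto_nhdsWithin Real.tendsto_arctan_atTop).comp hp
  have h2 := h1.mul_const |y|
  refine h2.congr fun σm => ?_
  rcases abs_cases y with ⟨h, _⟩ | ⟨h, _⟩
  · rw [h]; ring
  · rw [h, mul_neg (σm ^ 2 / σa), Real.arctan_neg]; ring

lemma eps_ev {σa : ℝ} (ha : 0 < σa) :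
    ∀ᶠ σm : ℝ in atTop, 0 < σm ∧ 0 < σa ^ 2 / σm ^ 4 ∧ σa ^ 2 / σm ^ 4 ≤ 1 := by
  filter_upwards [eventually_gt_atTop 0, (eps_tendsto σa).eventually_le_const one_pos]
    with σm h1 h2
  exact ⟨h1, by positivity, h2⟩

lemma den_tendsto {ν σa : ℝ} (hν : ν ∈ Set.Ico (0 : ℝ) (1 / 2)) (ha : 0 < σa) :
    Tendsto (fun σm : ℝ => ∫ y, wt ν (σa ^ 2 / σm ^ 4) y) atTop
      (nhds (Real.Gamma (1 / 2 - ν))) := by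
  have e : Real.Gamma (1 / 2 - ν) = ∫ y, gm (-2 * ν) y := by
    rw [gm_integral (by linarith [hν.2])]; congr 1; ring
  rw [e]
  refine tendsto_integral_filter_of_dominated_convergence _ ?_ ?_ (bound_integrable0 hν) ?_
  · exact Eventually.of_forall fun _ => (wt_meas _ _).aestronglyMeasurable
  · filter_upwards [eps_ev ha] with σm h
    filter_upwards [ae_ne_zero] with y hy
    rw [Real.norm_of_nonneg (wt_nonneg h.2.1 y).le]
    exact wt_bound hν.1 h.2.1 h.2.2 hy
  · filter_upwards [ae_ne_zero] with y hy using wt_tendsto hy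

lemma num_tendsto {ν σa : ℝ} (hν : ν ∈ Set.Ico (0 : ℝ) (1 / 2)) (ha : 0 < σa) :
    Tendsto (fun σm : ℝ => ∫ y, y * Real.arctan (σm ^ 2 / σa * y) * wt ν (σa ^ 2 / σm ^ 4) y) atTop
      (nhds (π / 2 * Real.Gamma (1 - ν))) := by
  have e : π / 2 * Real.Gamma (1 - ν) = ∫ y, π / 2 * gm (1 + -2 * ν) y := by
    rw [integral_const_mul, gm_integral (by linarith [hν.2])]; congr 2; ring
  rw [e]
  refine tendsto_integral_filter_of_dominated_convergence _ ?_ ?_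
    ((bound_integrable1 hν).const_mul (π / 2)) ?_
  · refine Eventually.of_forall fun σm => ?_
    have : Measurable Real.arctan := Real.continuous_arctan.measurable
    have h2 := wt_meas ν (σa ^ 2 / σm ^ 4)
    exact (by fun_prop : Measurable fun y =>
      y * Real.arctan (σm ^ 2 / σa * y) * wt ν (σa ^ 2 / σm ^ 4) y).aestronglyMeasurable
  · filter_upwards [eps_ev ha] with σm h
    filter_upwards [ae_ne_zero] with y hy
    rw [norm_mul, norm_mul, Real.norm_of_nonneg (wt_nonneg h.2.1 y).le, Real.norm_eq_abs,
      Real.norm_eq_abs]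
    have h1 := wt_bound hν.1 h.2.1 h.2.2 hy
    have h3 := (wt_nonneg (ν := ν) h.2.1 y).le
    calc |y| * |Real.arctan (σm ^ 2 / σa * y)| * wt ν (σa ^ 2 / σm ^ 4) y
        ≤ |y| * (π / 2) * (gm 0 y + gm 2 y + gm (-2 * ν) y) := by
          gcongr
          exact abs_arctan_le _
      _ = _ := by ring
  · filter_upwards [ae_ne_zero] with y hy
    rw [← abs_mul_gm hy, ← mul_assoc]
    exact (arctan_tendsto ha hy).mul (wt_tendsto hy)

lemma main_tendsto {ν σa : ℝ} (hν : ν ∈ Set.Ico (0 : ℝ) (1 / 2)) (ha : 0 < σa) :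
    Tendsto (fun σm : ℝ => Fmu' ν σa σm 1 1) atTop
      (nhds (π * Real.Gamma (1 - ν) / Real.Gamma (1 / 2 - ν) / σa - 1)) := by
  have hG : 0 < Real.Gamma (1 / 2 - ν) := Real.Gamma_pos_of_pos (by linarith [hν.2])
  have h := (((num_tendsto hν ha).const_mul (2 / σa)).div (den_tendsto hν ha) hG.ne').sub_const 1
  have e : 2 / σa * (π / 2 * Real.Gamma (1 - ν)) / Real.Gamma (1 / 2 - ν) - 1
      = π * Real.Gamma (1 - ν) / Real.Gamma (1 / 2 - ν) / σa - 1 := by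
    field_simp
  rw [e] at h
  refine h.congr' ?_
  filter_upwards [eps_ev ha] with σm hm
  exact (Fmu'_eq hν ha hm.1 hm.2.2).symm

/-- With a = θ = 1 and ν ∈ [0, 1/2), setting σ* = π·Γ(1−ν)/Γ(1/2−ν): for
σa > σ* the limit of F'_μ[0] as σm → ∞ exists and is negative, while for 0 < σa < σ* it exists
and is positive; in particular for σa < σ* large multiplicative noise places the system in the
stable phase. -/
theorem stmt8 (ν : ℝ) (hν : ν ∈ Set.Ico (0 : ℝ) (1 / 2)) :
    (∀ σa : ℝ, π * Real.Gamma (1 - ν) / Real.Gamma (1 / 2 - ν) < σa →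
      ∃ L : ℝ, L < 0 ∧ Tendsto (fun σm : ℝ => Fmu' ν σa σm 1 1) atTop (nhds L)) ∧
    (∀ σa : ℝ, 0 < σa → σa < π * Real.Gamma (1 - ν) / Real.Gamma (1 / 2 - ν) →
      ∃ L : ℝ, 0 < L ∧ Tendsto (fun σm : ℝ => Fmu' ν σa σm 1 1) atTop (nhds L) ∧
        ∀ᶠ σm : ℝ in atTop, 0 < Fmu' ν σa σm 1 1) := by
  have hG : 0 < Real.Gamma (1 / 2 - ν) := Real.Gamma_pos_of_pos (by linarith [hν.2])
  have hG1 : 0 < Real.Gamma (1 - ν) := Real.Gamma_pos_of_pos (by linarith [hν.2])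
  have hs : 0 < π * Real.Gamma (1 - ν) / Real.Gamma (1 / 2 - ν) := by positivity
  constructor
  · intro σa h
    have ha : 0 < σa := hs.trans h
    exact ⟨_, sub_neg.2 ((div_lt_one ha).2 h), main_tendsto hν ha⟩
  · intro σa ha h
    have hL := sub_pos.2 ((one_lt_div ha).2 h)
    have ht := main_tendsto hν ha
    exact ⟨_, hL, ht, ht.eventually_const_lt hL⟩
end

section
/- Fix a = 1, θ = 1, σa > 0, σm > 0 and ν ∈ [0,1]. Then F'_μ(ν, σa, σm, 1, 1)[0] = (4/(σm·σa)) · ∫₀^∞ arctan(σm·x/σa) · ( x·(1 + σm²·(1−ν)) − x³ ) · ρ̂0(x) dx, where ρ̂0(x) = ρ0[0](x)/Z[0] is the normalised symmetric stationary density. -/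
open MeasureTheory Real Set Filter

lemma r_cont (ν σa σm μ : ℝ) : Continuous (rho0 ν σa σm 1 1 μ) := by
  unfold rho0
  have h : ∀ x : ℝ, 1 + (σm ^ 2 / σa ^ 2) * x ^ 2 ≠ 0 := fun x => by positivity
  have h2 : Continuous fun x : ℝ => Real.log (1 + (σm ^ 2 / σa ^ 2) * x ^ 2) :=
    Continuous.log (by fun_prop) h
  have h3 : Continuous fun x : ℝ => Real.arctan (σm * x / σa) :=
    Real.continuous_arctan.comp (by fun_prop)
  fun_prop

lemma r_split (ν σa σm μ x : ℝ) : rho0 ν σa σm 1 1 μ x =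
    rho0 ν σa σm 1 1 0 x * Real.exp (2 / (σa * σm) * Real.arctan (σm * x / σa) * μ) := by
  unfold rho0
  rw [← Real.exp_add]; congr 1; ring

lemma r_pos (ν σa σm μ x : ℝ) : 0 < rho0 ν σa σm 1 1 μ x := Real.exp_pos _

lemma r_bound (ν σa σm : ℝ) (hσa : 0 < σa) (hσm : 0 < σm) :
    ∃ C : ℝ, ∀ x, rho0 ν σa σm 1 1 0 x ≤ C * Real.exp (-(1 / (2 * σm ^ 2)) * x ^ 2) := by
  set κ := (1 - 1 - ν * σm ^ 2 + σa ^ 2 / σm ^ 2) / σm ^ 2 with hκ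
  set b := σm ^ 2 / σa ^ 2 with hb
  have hbpos : 0 < b := by positivity
  set e := 1 / (2 * σm ^ 2 * b * (|κ| + 1)) with he
  have hk : 0 ≤ |κ| := abs_nonneg κ
  have hepos : 0 < e := by positivity
  refine ⟨Real.exp (|κ| * (e - 1 - Real.log e)), fun x => ?_⟩
  rw [← Real.exp_add]
  unfold rho0
  apply Real.exp_le_exp.mpr
  rw [← hκ, ← hb]
  have hy : 0 < 1 + b * x ^ 2 := by positivity
  have h1 : Real.log (1 + b * x ^ 2) ≤ e * (1 + b * x ^ 2) - 1 - Real.log e := by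
    have := Real.log_le_sub_one_of_pos (mul_pos hepos hy)
    rw [Real.log_mul hepos.ne' hy.ne'] at this
    linarith
  have h0 : 0 ≤ Real.log (1 + b * x ^ 2) := Real.log_nonneg (by nlinarith [sq_nonneg x])
  have h2 : κ * Real.log (1 + b * x ^ 2) ≤ |κ| * (e * (1 + b * x ^ 2) - 1 - Real.log e) :=
    (mul_le_mul_of_nonneg_right (le_abs_self κ) h0).trans (mul_le_mul_of_nonneg_left h1 hk)
  have h3 : |κ| * (e * b) ≤ 1 / (2 * σm ^ 2) := by
    have : (|κ| + 1) * (e * b) = 1 / (2 * σm ^ 2) := by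
      rw [he]; field_simp
    have : 0 < e * b := by positivity
    linarith
  have h4 := mul_le_mul_of_nonneg_right h3 (sq_nonneg x)
  have h5 : x ^ 2 / σm ^ 2 = 2 * (1 / (2 * σm ^ 2) * x ^ 2) := by field_simp
  have h6 : 2 * 1 * 0 / (σa * σm) * Real.arctan (σm * x / σa) = 0 := by simp
  rw [h5, h6]
  nlinarith

lemma pow_int (ν σa σm : ℝ) (hσa : 0 < σa) (hσm : 0 < σm) (n : ℕ) :
    Integrable (fun x : ℝ => x ^ n * rho0 ν σa σm 1 1 0 x) := by
  obtain ⟨C, hC⟩ := r_bound ν σa σm hσa hσm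
  have h := (integrable_rpow_mul_exp_neg_mul_sq (b := 1 / (2 * σm ^ 2)) (by positivity)
    (s := (n : ℝ)) (by have : (0 : ℝ) ≤ n := n.cast_nonneg
                       linarith)).const_mul C
  refine h.mono ((by fun_prop : Continuous fun x : ℝ => x ^ n).mul
    (r_cont ν σa σm 0)).aestronglyMeasurable (ae_of_all _ fun x => ?_)
  simp only [Real.rpow_natCast, norm_mul, Real.norm_eq_abs, abs_of_pos (r_pos ν σa σm 0 x),
    abs_of_pos (Real.exp_pos _)]
  have h1 := (hC x).trans (mul_le_mul_of_nonneg_right (le_abs_self C) (Real.exp_pos _).le)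
  calc _ ≤ |x ^ n| * (|C| * rexp (-(1 / (2 * σm ^ 2)) * x ^ 2)) :=
        mul_le_mul_of_nonneg_left h1 (abs_nonneg _)
    _ = _ := by ring

lemma at_abs (y : ℝ) : |Real.arctan y| ≤ 2 := by
  have h1 := Real.arctan_lt_pi_div_two y
  have h2 := Real.neg_pi_div_two_lt_arctan y
  have := Real.pi_le_four
  rw [abs_le]; constructor <;> linarith

lemma at_cont (σa σm : ℝ) : Continuous fun x : ℝ => Real.arctan (σm * x / σa) :=
  Real.continuous_arctan.comp (by fun_prop)

lemma pow_at_int (ν σa σm : ℝ) (hσa : 0 < σa) (hσm : 0 < σm) (n : ℕ) :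
    Integrable (fun x : ℝ => Real.arctan (σm * x / σa) * (x ^ n * rho0 ν σa σm 1 1 0 x)) :=
  (pow_int ν σa σm hσa hσm n).bdd_mul (c := 2) (at_cont σa σm).aestronglyMeasurable
    (ae_of_all _ fun x => at_abs _)

lemma exp_bd (k A μ : ℝ) (hk : 0 < k) (hA : |A| ≤ 2) :
    Real.exp (k * A * μ) ≤ Real.exp (k * 2 * |μ|) := by
  apply Real.exp_le_exp.mpr
  calc k * A * μ ≤ |k * A * μ| := le_abs_self _
    _ = k * |A| * |μ| := by rw [abs_mul, abs_mul, abs_of_pos hk]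
    _ ≤ _ := by gcongr

lemma pow_int_mu (ν σa σm μ : ℝ) (hσa : 0 < σa) (hσm : 0 < σm) (n : ℕ) :
    Integrable (fun x : ℝ => x ^ n * rho0 ν σa σm 1 1 μ x) := by
  have h := (pow_int ν σa σm hσa hσm n).bdd_mul
    (f := fun x => Real.exp (2 / (σa * σm) * Real.arctan (σm * x / σa) * μ))
    (c := Real.exp (2 / (σa * σm) * 2 * |μ|))
    (by have := at_cont σa σm
        exact (by fun_prop : Continuous _).aestronglyMeasurable)
    (ae_of_all _ fun x => by
      rw [Real.norm_eq_abs, abs_of_pos (Real.exp_pos _)]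
      exact exp_bd _ _ _ (by positivity) (at_abs _))
  refine h.congr (ae_of_all _ fun x => ?_)
  simp only
  rw [r_split ν σa σm μ x]; ring

lemma mom_deriv (ν σa σm : ℝ) (hσa : 0 < σa) (hσm : 0 < σm) (n : ℕ) :
    HasDerivAt (fun μ => ∫ x : ℝ, x ^ n * rho0 ν σa σm 1 1 μ x)
      (∫ x : ℝ, 2 / (σa * σm) *
        (Real.arctan (σm * x / σa) * (x ^ n * rho0 ν σa σm 1 1 0 x))) 0 := by
  set k := 2 / (σa * σm) with hk
  have hkp : 0 < k := by positivity
  have key := (hasDerivAt_integral_of_dominated_loc_of_deriv_le (μ := volume) (x₀ := (0 : ℝ))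
    (F := fun μ x => x ^ n * rho0 ν σa σm 1 1 μ x)
    (F' := fun μ x => k * (Real.arctan (σm * x / σa) * (x ^ n * rho0 ν σa σm 1 1 μ x)))
    (s := Metric.ball 0 1)
    (bound := fun x => k * Real.exp (k * 2) * 2 * ‖x ^ n * rho0 ν σa σm 1 1 0 x‖)
    (Metric.ball_mem_nhds 0 one_pos)
    (Eventually.of_forall fun μ => (pow_int_mu ν σa σm μ hσa hσm n).aestronglyMeasurable)
    (pow_int ν σa σm hσa hσm n)
    ((pow_at_int ν σa σm hσa hσm n).const_mul k).aestronglyMeasurable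
    (ae_of_all _ fun x μ hμ => ?_)
    ((pow_int ν σa σm hσa hσm n).norm.const_mul _)
    (ae_of_all _ fun x μ hμ => ?_)).2
  · exact key
  · have hμ1 : |μ| ≤ 1 := by
      have := Metric.mem_ball.mp hμ
      rw [Real.dist_eq, sub_zero] at this
      exact this.le
    rw [r_split ν σa σm μ x, ← hk]
    have hA := at_abs (σm * x / σa)
    have h1 : Real.exp (k * Real.arctan (σm * x / σa) * μ) ≤ Real.exp (k * 2) := by
      refine (exp_bd _ _ _ hkp hA).trans (Real.exp_le_exp.mpr ?_)
      calc k * 2 * |μ| ≤ k * 2 * 1 := by gcongr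
        _ = _ := by ring
    calc _ = k * Real.exp (k * Real.arctan (σm * x / σa) * μ) * |Real.arctan (σm * x / σa)|
            * ‖x ^ n * rho0 ν σa σm 1 1 0 x‖ := by
          simp only [norm_mul, Real.norm_eq_abs, Real.abs_exp, abs_of_pos hkp]; ring
      _ ≤ _ := by gcongr
  · have hs : (fun y => x ^ n * rho0 ν σa σm 1 1 y x) = fun y => x ^ n *
        (rho0 ν σa σm 1 1 0 x * Real.exp (k * Real.arctan (σm * x / σa) * y)) := by
      funext y
      rw [r_split ν σa σm y x]
    have h1 : HasDerivAt (fun y : ℝ => k * Real.arctan (σm * x / σa) * y)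
        (k * Real.arctan (σm * x / σa)) μ := by
      simpa using (hasDerivAt_id μ).const_mul (k * Real.arctan (σm * x / σa))
    have h2 := (h1.exp.const_mul (rho0 ν σa σm 1 1 0 x)).const_mul (x ^ n)
    rw [← hs] at h2
    refine h2.congr_deriv ?_
    rw [r_split ν σa σm μ x, ← hk]
    ring

lemma r_even (ν σa σm x : ℝ) : rho0 ν σa σm 1 1 0 (-x) = rho0 ν σa σm 1 1 0 x := by
  unfold rho0; simp

lemma r_deriv (ν σa σm x : ℝ) (hσa : 0 < σa) (hσm : 0 < σm) :
    HasDerivAt (fun x => (σa ^ 2 + σm ^ 2 * x ^ 2) * rho0 ν σa σm 1 1 0 x)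
      ((2 * σm ^ 2 * (1 - ν) * x - 2 * x ^ 3) * rho0 ν σa σm 1 1 0 x) x := by
  have hy : 1 + (σm ^ 2 / σa ^ 2) * x ^ 2 ≠ 0 := by positivity
  have hsq : HasDerivAt (fun x : ℝ => x ^ 2) (2 * x) x := by simpa using hasDerivAt_pow 2 x
  have h1 := ((((hsq.const_mul (σm ^ 2 / σa ^ 2)).const_add 1).log hy).const_mul
    ((1 - 1 - ν * σm ^ 2 + σa ^ 2 / σm ^ 2) / σm ^ 2)).sub (hsq.div_const (σm ^ 2))
  have h2 := ((hsq.const_mul (σm ^ 2)).const_add (σa ^ 2)).mul h1.exp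
  have hr : ∀ x, rho0 ν σa σm 1 1 0 x = Real.exp
      (((1 - 1 - ν * σm ^ 2 + σa ^ 2 / σm ^ 2) / σm ^ 2) *
        Real.log (1 + (σm ^ 2 / σa ^ 2) * x ^ 2) - x ^ 2 / σm ^ 2) := fun x => by
    unfold rho0; simp
  simp only [hr]
  refine h2.congr_deriv ?_
  simp only [Pi.sub_apply]
  have hz : σa ^ 2 + σm ^ 2 * x ^ 2 ≠ 0 := by positivity
  have hy' : 1 + (σm ^ 2 / σa ^ 2) * x ^ 2 = (σa ^ 2 + σm ^ 2 * x ^ 2) / σa ^ 2 := by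
    field_simp
  generalize Real.exp _ = E
  rw [hy']
  field_simp
  ring

lemma parts (ν σa σm : ℝ) (hσa : 0 < σa) (hσm : 0 < σm) :
    ∫ x : ℝ, (Real.arctan (σm * x / σa) * ((2 * σm ^ 2 * (1 - ν) * x - 2 * x ^ 3) *
      rho0 ν σa σm 1 1 0 x)) = - (σm * σa) * Z ν σa σm 1 1 0 := by
  have i0 := pow_at_int ν σa σm hσa hσm 0
  have i1 := pow_at_int ν σa σm hσa hσm 1
  have i2 := pow_at_int ν σa σm hσa hσm 2
  have i3 := pow_at_int ν σa σm hσa hσm 3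
  have iz : Integrable (rho0 ν σa σm 1 1 0) := by simpa using pow_int ν σa σm hσa hσm 0
  have ig : Integrable (fun x : ℝ => Real.arctan (σm * x / σa) *
      ((2 * σm ^ 2 * (1 - ν) * x - 2 * x ^ 3) * rho0 ν σa σm 1 1 0 x)) :=
    ((i1.const_mul (2 * σm ^ 2 * (1 - ν))).sub (i3.const_mul 2)).congr
      (ae_of_all _ fun x => by simp only [Pi.sub_apply]; ring)
  have h := integral_eq_zero_of_hasDerivAt_of_integrable
    (f := fun x : ℝ => Real.arctan (σm * x / σa) *
      ((σa ^ 2 + σm ^ 2 * x ^ 2) * rho0 ν σa σm 1 1 0 x))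
    (f' := fun x : ℝ => (σm * σa) * rho0 ν σa σm 1 1 0 x + Real.arctan (σm * x / σa) *
      ((2 * σm ^ 2 * (1 - ν) * x - 2 * x ^ 3) * rho0 ν σa σm 1 1 0 x))
    (fun x => by
      have hl : HasDerivAt (fun x : ℝ => σm * x / σa) (σm / σa) x := by
        simpa using ((hasDerivAt_id x).const_mul σm).div_const σa
      refine (hl.arctan.mul (r_deriv ν σa σm x hσa hσm)).congr_deriv ?_
      congr 1
      have : 1 + (σm * x / σa) ^ 2 = (σa ^ 2 + σm ^ 2 * x ^ 2) / σa ^ 2 := by field_simp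
      rw [this]
      have hz : σa ^ 2 + σm ^ 2 * x ^ 2 ≠ 0 := by positivity
      field_simp)
    ((iz.const_mul (σm * σa)).add ig)
    (((i0.const_mul (σa ^ 2)).add (i2.const_mul (σm ^ 2))).congr
      (ae_of_all _ fun x => by simp only [Pi.add_apply]; ring))
  rw [integral_add (iz.const_mul (σm * σa)) ig, integral_const_mul] at h
  unfold Z
  linarith

/-- With a = θ = 1, F'_μ[0] equals (4/(σm·σa)) times the integral over (0,∞) of
arctan(σm·x/σa)·(x·(1 + σm²(1−ν)) − x³) against the normalised symmetric stationary density. -/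
theorem stmt10 (σa σm ν : ℝ) (hσa : 0 < σa) (hσm : 0 < σm) (hν : ν ∈ Set.Icc (0 : ℝ) 1) :
    Fmu' ν σa σm 1 1 =
      (4 / (σm * σa)) * ∫ x in Set.Ioi (0 : ℝ),
        Real.arctan (σm * x / σa) * (x * (1 + σm ^ 2 * (1 - ν)) - x ^ 3) *
          (rho0 ν σa σm 1 1 0 x / Z ν σa σm 1 1 0) := by
  have iz : Integrable (rho0 ν σa σm 1 1 0) := by simpa using pow_int ν σa σm hσa hσm 0
  have hZ : 0 < Z ν σa σm 1 1 0 := by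
    unfold Z
    rw [integral_pos_iff_support_of_nonneg (fun x => (r_pos ν σa σm 0 x).le) iz]
    have : Function.support (rho0 ν σa σm 1 1 0) = Set.univ :=
      Set.eq_univ_of_forall fun x => (r_pos ν σa σm 0 x).ne'
    rw [this]; simp
  -- derivative
  have d0 := mom_deriv ν σa σm hσa hσm 0
  have d1 := mom_deriv ν σa σm hσa hσm 1
  have e0 : (fun μ => ∫ x : ℝ, x ^ 0 * rho0 ν σa σm 1 1 μ x) = fun μ => Z ν σa σm 1 1 μ := by
    funext μ; simp [Z]
  rw [e0] at d0
  have eF : (fun μ => F ν σa σm 1 1 μ) = fun μ =>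
      ((∫ x : ℝ, x ^ 1 * rho0 ν σa σm 1 1 μ x) - μ * Z ν σa σm 1 1 μ) / Z ν σa σm 1 1 μ := by
    funext μ
    unfold F Z
    congr 1
    have j0 := pow_int_mu ν σa σm μ hσa hσm 0
    have j1 := pow_int_mu ν σa σm μ hσa hσm 1
    simp only [pow_zero, one_mul] at j0
    rw [← integral_const_mul, ← integral_sub j1 (j0.const_mul μ)]
    congr 1; funext x; ring
  have hM : ∫ x : ℝ, x ^ 1 * rho0 ν σa σm 1 1 0 x = 0 := by
    have := integral_neg_eq_self (fun x : ℝ => x ^ 1 * rho0 ν σa σm 1 1 0 x) volume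
    simp only [r_even, pow_one, neg_mul, integral_neg] at this
    simp only [pow_one]
    linarith
  have dF := (d1.sub ((hasDerivAt_id (0 : ℝ)).mul d0)).div d0 hZ.ne'
  have hF : Fmu' ν σa σm 1 1 = 2 / (σa * σm) * (∫ x : ℝ,
      Real.arctan (σm * x / σa) * (x ^ 1 * rho0 ν σa σm 1 1 0 x)) / Z ν σa σm 1 1 0 - 1 := by
    unfold Fmu'
    rw [eF]
    refine (HasDerivAt.deriv dF).trans ?_
    simp only [Pi.sub_apply, Pi.mul_apply, id, hM, integral_const_mul]
    field_simp
    ring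
  have hp := parts ν σa σm hσa hσm
  have i1 := pow_at_int ν σa σm hσa hσm 1
  have i3 := pow_at_int ν σa σm hσa hσm 3
  have ig : Integrable (fun x : ℝ => Real.arctan (σm * x / σa) *
      ((2 * σm ^ 2 * (1 - ν) * x - 2 * x ^ 3) * rho0 ν σa σm 1 1 0 x)) :=
    ((i1.const_mul (2 * σm ^ 2 * (1 - ν))).sub (i3.const_mul 2)).congr
      (ae_of_all _ fun x => by simp only [Pi.sub_apply]; ring)
  -- halve
  set G : ℝ → ℝ := fun x => Real.arctan (σm * x / σa) * (x * (1 + σm ^ 2 * (1 - ν)) - x ^ 3) *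
          (rho0 ν σa σm 1 1 0 x / Z ν σa σm 1 1 0) with hG
  have hGe : ∀ x, G |x| = G x := by
    intro x
    rcases abs_choice x with h | h
    · rw [h]
    · rw [h]
      simp only [hG, r_even]
      have : σm * -x / σa = -(σm * x / σa) := by ring
      rw [this, Real.arctan_neg]
      ring
  have hhalf : ∫ x, G x = 2 * ∫ x in Set.Ioi (0 : ℝ), G x := by
    rw [← integral_comp_abs]
    simp only [hGe]
  have hGi : ∫ x, G x = ((∫ x : ℝ,
      Real.arctan (σm * x / σa) * (x ^ 1 * rho0 ν σa σm 1 1 0 x)) +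
      (1 / 2) * (- (σm * σa) * Z ν σa σm 1 1 0)) / Z ν σa σm 1 1 0 := by
    rw [← hp, ← integral_const_mul, ← integral_add i1 (ig.const_mul (1 / 2)), ← integral_div]
    congr 1; funext x
    simp only [hG]; ring
  have hI : ∫ x in Set.Ioi (0 : ℝ), G x = (∫ x, G x) / 2 := by linarith
  rw [hF, hI, hGi]
  field_simp
  ring
end
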